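/- Let T be a locally simple complete CLO theory such that IT(T) is uncountable. Then there is a family of 2^{2^{ℵ₀}} models of T whose sets of realized convex types are pairwise distinct; in particular, T has at least 2^{2^{ℵ₀}} models that are pairwise not back-and-forth equivalent (hence pairwise non-isomorphic). -/

import Mathlib

open FirstOrder Language Set

/-- Relation symbols of the language `L_κ` of colored linear orders:
a binary `<` and a unary color predicate for each `i : ι`. -/
inductive CLORel (ι : Type) : ℕ → Type
  | lt : CLORel ι 2
  | color (i : ι) : CLORel ι 1

/-- The language `L_κ`, where the colors are indexed by `ι`. -/
def CLOLang (ι : Type) : Language :=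
  ⟨fun _ => Empty, CLORel ι⟩

/-- Interpretation of the relation symbols on a linear order `M` with colors `c`. -/
def cloRelMap {ι M : Type} [LinearOrder M] (c : ι → Set M) :
    ∀ {n}, CLORel ι n → (Fin n → M) → Prop
  | _, .lt => fun v => v 0 < v 1
  | _, .color i => fun v => v 0 ∈ c i

/-- The canonical `L_κ`-structure (a colored linear order, CLO) on a linear
order `M` whose colors are given by `c : ι → Set M`. -/
def CLOStr (ι M : Type) [LinearOrder M] (c : ι → Set M) : (CLOLang ι).Structure M where
  funMap := fun f => Empty.elim f
  RelMap := cloRelMap c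

/-- Satisfaction of an `L_κ`-formula in the CLO `(M, <, c)`. -/
def Sat {ι : Type} (M : Type) [LinearOrder M] (c : ι → Set M) {α : Type}
    (φ : (CLOLang ι).Formula α) (v : α → M) : Prop :=
  letI := CLOStr ι M c
  φ.Realize v

/-- The induced colors on a subset of a CLO. -/
def subColor {ι M : Type} (c : ι → Set M) (s : Set M) : ι → Set s :=
  fun i => {x | (x : M) ∈ c i}

/-- Elementary equivalence of CLOs. -/
def CLOEquiv (ι : Type) (M : Type) [LinearOrder M] (cM : ι → Set M)
    (N : Type) [LinearOrder N] (cN : ι → Set N) : Prop :=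
  letI := CLOStr ι M cM
  letI := CLOStr ι N cN
  M ≅[CLOLang ι] N

/-- Isomorphism of CLOs (as `L_κ`-structures). -/
def CLOIso (ι : Type) (M : Type) [LinearOrder M] (cM : ι → Set M)
    (N : Type) [LinearOrder N] (cN : ι → Set N) : Prop :=
  letI := CLOStr ι M cM
  letI := CLOStr ι N cN
  Nonempty (M ≃[CLOLang ι] N)

/-- The complete theory of a CLO. -/
def CLOTheory (ι : Type) (M : Type) [LinearOrder M] (c : ι → Set M) : (CLOLang ι).Theory :=
  letI := CLOStr ι M c
  (CLOLang ι).completeTheory M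

/-- The induced colors on a lexicographic sum `Σₗ i, A i` of CLOs. -/
def sigmaColor {ι I : Type} {A : I → Type} (c : ∀ i, ι → Set (A i)) :
    ι → Set (Σₗ i, A i) :=
  fun k => {x | (ofLex x).2 ∈ c (ofLex x).1 k}

/-- The induced colors on a two-term lexicographic sum `α ⊕ₗ β` of CLOs. -/
def sumColor2 {ι α β : Type} (ca : ι → Set α) (cb : ι → Set β) : ι → Set (α ⊕ₗ β) :=
  fun k => {x | Sum.elim (· ∈ ca k) (· ∈ cb k) (ofLex x)}

/-- The set defined by a parameter-free formula in one variable in a CLO. -/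
def FmlSet (ι : Type) (M : Type) [LinearOrder M] (c : ι → Set M)
    (φ : (CLOLang ι).Formula Unit) : Set M :=
  {x | Sat M c φ fun _ => x}

/-- A CLO is self-additive if it has more than one point and its only
convex parameter-free-definable subsets are `∅` and the whole order. -/
def SelfAdditive (ι : Type) (M : Type) [LinearOrder M] (c : ι → Set M) : Prop :=
  Nontrivial M ∧
    ∀ φ : (CLOLang ι).Formula Unit, (FmlSet ι M c φ).OrdConnected →
      FmlSet ι M c φ = ∅ ∨ FmlSet ι M c φ = Set.univ

/-- `a ∼ b`: some set definable with parameter `a` is convex, bounded above and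
below, and contains both `a` and `b`. -/
def SimRel (ι : Type) {M : Type} [LinearOrder M] (c : ι → Set M) (a b : M) : Prop :=
  ∃ φ : (CLOLang ι).Formula (Unit ⊕ Unit),
    (Set.OrdConnected {x | Sat M c φ (Sum.elim (fun _ => x) fun _ => a)}) ∧
    (∃ u : M, ∀ z ∈ {x | Sat M c φ (Sum.elim (fun _ => x) fun _ => a)}, z < u) ∧
    (∃ l : M, ∀ z ∈ {x | Sat M c φ (Sum.elim (fun _ => x) fun _ => a)}, l < z) ∧
    a ∈ {x | Sat M c φ (Sum.elim (fun _ => x) fun _ => a)} ∧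
    b ∈ {x | Sat M c φ (Sum.elim (fun _ => x) fun _ => a)}

/-- `f : M → N` is an elementary map of CLOs. -/
def IsElemMap (ι : Type) {M N : Type} [LinearOrder M] [LinearOrder N]
    (cM : ι → Set M) (cN : ι → Set N) (f : M → N) : Prop :=
  ∀ (k : ℕ) (φ : (CLOLang ι).Formula (Fin k)) (v : Fin k → M),
    Sat M cM φ v ↔ Sat N cN φ (f ∘ v)

/-- A subset of a CLO, with its induced structure, is an elementary substructure. -/
def IsElemSubset (ι : Type) (B : Type) [LinearOrder B] (cB : ι → Set B) (s : Set B) : Prop :=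
  IsElemMap ι (subColor cB s) cB (Subtype.val : s → B)

/-- A complete `L_κ`-theory is ℵ₀-categorical: any two at-most-countable CLO
models of it are isomorphic.  (Finite and empty models are allowed.) -/
def Aleph0CatTheory (ι : Type) (T : (CLOLang ι).Theory) : Prop :=
  ∀ (N₁ N₂ : Type) (i₁ : LinearOrder N₁) (i₂ : LinearOrder N₂)
    (c₁ : ι → Set N₁) (c₂ : ι → Set N₂),
    Countable N₁ → Countable N₂ →
    (letI := i₁; CLOTheory ι N₁ c₁) = T → (letI := i₂; CLOTheory ι N₂ c₂) = T →
    (letI := i₁; letI := i₂; CLOIso ι N₁ c₁ N₂ c₂)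

/-- `φ` is a convex formula for the complete theory of the CLO `(M₀, c₀)`:
its realizations in every model of that theory form a convex set. -/
def ConvexFml (ι : Type) (M₀ : Type) [LinearOrder M₀] (c₀ : ι → Set M₀)
    (φ : (CLOLang ι).Formula Unit) : Prop :=
  ∀ (B : Type) (iB : LinearOrder B) (cB : ι → Set B),
    (letI := iB; CLOEquiv ι B cB M₀ c₀) → (letI := iB; Set.OrdConnected (FmlSet ι B cB φ))

/-- The set of common realizations of a set of one-variable formulas in a CLO. -/
def TypeSet (ι : Type) (M : Type) [LinearOrder M] (c : ι → Set M)
    (Φ : Set ((CLOLang ι).Formula Unit)) : Set M :=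
  {x | ∀ φ ∈ Φ, Sat M c φ fun _ => x}

/-- A set of one-variable formulas is consistent with the complete theory of
`(M₀, c₀)`: it is realized in some model of that theory. -/
def TypeConsistent (ι : Type) (M₀ : Type) [LinearOrder M₀] (c₀ : ι → Set M₀)
    (Φ : Set ((CLOLang ι).Formula Unit)) : Prop :=
  ∃ (B : Type) (iB : LinearOrder B) (cB : ι → Set B),
    (letI := iB; CLOEquiv ι B cB M₀ c₀) ∧ (letI := iB; ∃ b : B, b ∈ TypeSet ι B cB Φ)

/-- `Φ` is a convex type of the complete theory of `(M₀, c₀)`: a maximal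
consistent set of convex formulas over `∅`.  `IT(T)` is the set of all such. -/
def IsConvexType (ι : Type) (M₀ : Type) [LinearOrder M₀] (c₀ : ι → Set M₀)
    (Φ : Set ((CLOLang ι).Formula Unit)) : Prop :=
  (∀ φ ∈ Φ, ConvexFml ι M₀ c₀ φ) ∧ TypeConsistent ι M₀ c₀ Φ ∧
    ∀ ψ, ConvexFml ι M₀ c₀ ψ → TypeConsistent ι M₀ c₀ (insert ψ Φ) → ψ ∈ Φ

/-- A convex type is isolated if it contains a convex formula contained in no
other convex type. -/
def IsolatedCT (ι : Type) (M₀ : Type) [LinearOrder M₀] (c₀ : ι → Set M₀)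
    (Φ : Set ((CLOLang ι).Formula Unit)) : Prop :=
  ∃ φ ∈ Φ, ConvexFml ι M₀ c₀ φ ∧
    ∀ Ψ, IsConvexType ι M₀ c₀ Ψ → φ ∈ Ψ → Ψ = Φ

/-- A CLO is ℵ₀-saturated: every finitely-satisfiable set of formulas in one
variable over finitely many parameters is realized. -/
def Aleph0Saturated (ι : Type) (S : Type) [LinearOrder S] (cS : ι → Set S) : Prop :=
  ∀ (m : ℕ) (a : Fin m → S) (p : Set ((CLOLang ι).Formula (Unit ⊕ Fin m))),
    (∀ q : Finset ((CLOLang ι).Formula (Unit ⊕ Fin m)), ↑q ⊆ p →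
      ∃ x : S, ∀ φ ∈ q, Sat S cS φ (Sum.elim (fun _ => x) a)) →
    ∃ x : S, ∀ φ ∈ p, Sat S cS φ (Sum.elim (fun _ => x) a)

/-- A CLO is strongly ℵ₀-homogeneous: finite tuples with the same complete type
are conjugate under an automorphism. -/
def StronglyAleph0Homogeneous (ι : Type) (S : Type) [LinearOrder S] (cS : ι → Set S) : Prop :=
  ∀ (m : ℕ) (a b : Fin m → S),
    (∀ φ : (CLOLang ι).Formula (Fin m), Sat S cS φ a ↔ Sat S cS φ b) →
    ∃ g : S ≃ S, (∀ x y : S, x < y ↔ g x < g y) ∧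
      (∀ (k : ι) (x : S), x ∈ cS k ↔ g x ∈ cS k) ∧ ∀ i, g (a i) = b i

/-- Sufficiently saturated: ℵ₀-saturated and strongly ℵ₀-homogeneous. -/
def SuffSaturated (ι : Type) (S : Type) [LinearOrder S] (cS : ι → Set S) : Prop :=
  Aleph0Saturated ι S cS ∧ StronglyAleph0Homogeneous ι S cS

/-- The complete theory of `(M₀, c₀)` is locally simple: for every sufficiently
saturated model `S` and every convex type `Φ`, the theory `T_Φ = Th(Φ(S))` is
ℵ₀-categorical. -/
def LocallySimple (ι : Type) (M₀ : Type) [LinearOrder M₀] (c₀ : ι → Set M₀) : Prop :=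
  ∀ (S : Type) [LinearOrder S], ∀ (cS : ι → Set S),
    CLOEquiv ι S cS M₀ c₀ → SuffSaturated ι S cS →
    ∀ Φ, IsConvexType ι M₀ c₀ Φ →
      Aleph0CatTheory ι
        (CLOTheory ι (TypeSet ι S cS Φ) (subColor cS (TypeSet ι S cS Φ)))

/-- A finite set of pairs is a partial isomorphism of CLOs: it preserves `<`,
equality, and each color, in both directions. -/
def IsPartialIso (ι : Type) {M N : Type} [LinearOrder M] [LinearOrder N]
    (cM : ι → Set M) (cN : ι → Set N) (f : Finset (M × N)) : Prop :=
  ∀ p ∈ f, ∀ q ∈ f,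
    (p.1 < q.1 ↔ p.2 < q.2) ∧ (p.1 = q.1 ↔ p.2 = q.2) ∧
    ∀ k, p.1 ∈ cM k ↔ p.2 ∈ cN k

/-- Back-and-forth equivalence of CLOs: a nonempty family of finite partial
isomorphisms with the back-and-forth extension properties. -/
def BackForthEquiv (ι : Type) (M : Type) [LinearOrder M] (cM : ι → Set M)
    (N : Type) [LinearOrder N] (cN : ι → Set N) : Prop :=
  ∃ F : Set (Finset (M × N)), F.Nonempty ∧ (∀ f ∈ F, IsPartialIso ι cM cN f) ∧
    (∀ f ∈ F, ∀ m : M, ∃ g ∈ F, f ⊆ g ∧ ∃ n : N, (m, n) ∈ g) ∧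
    (∀ f ∈ F, ∀ n : N, ∃ g ∈ F, f ⊆ g ∧ ∃ m : M, (m, n) ∈ g)

/-- The set of complete theories `Th(Φ(A))` as `A` ranges over models of the
complete theory of `(M₀, c₀)` (including the theory of the empty structure,
in case `Φ` is omitted). -/
def TheoriesAt (ι : Type) (M₀ : Type) [LinearOrder M₀] (c₀ : ι → Set M₀)
    (Φ : Set ((CLOLang ι).Formula Unit)) : Set ((CLOLang ι).Theory) :=
  {T | ∃ (A : Type) (iA : LinearOrder A) (cA : ι → Set A),
    (letI := iA; CLOEquiv ι A cA M₀ c₀) ∧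
    T = (letI := iA; CLOTheory ι (TypeSet ι A cA Φ) (subColor cA (TypeSet ι A cA Φ)))}

/-!
Pass to an ultrapower `S` of `M₀` which is ℵ₀-saturated, so that every convex type is realized
in `S`. If `C` is a convex `∅`-definable set, then the finite maps which are the identity outside
`C` and preserve types inside `C` form a back-and-forth system. Hence, by saturation, whenever
`φ(a, x)` holds with `a` in `C` and all parameters `x` outside `C`, it is implied by a
parameter-free formula true of `a`. Since distinct convex types are separated by convex formulas,
the Tarski–Vaught test shows that a union of convex types is an elementary substructure of `S` as
soon as it meets every nonempty `∅`-definable set. There are only countably many of these, so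
some countable set `D` of convex types achieves this.

The convex types form a closed subset of a Cantor space, so, being uncountable, they still number
`2 ^ ℵ₀` after `D` is removed. Each set of the remaining ones, added to `D`, is then exactly the
set of convex types realized in some elementary substructure of `S`, and the set of realized
convex types is invariant under back-and-forth equivalence.
-/

section SetsAndOrders

theorem lt_notMem_iff_of_ordConnected {X : Type*} [LinearOrder X] {C : Set X}
    (hC : C.OrdConnected) {u v z : X} (hu : u ∈ C) (hv : v ∈ C) (hz : z ∉ C) :
    u < z ↔ v < z := by
  have key {u v : X} (hu : u ∈ C) (hv : v ∈ C) (h : u < z) : v < z :=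
    not_le.1 fun hzv => hz (hC.out hu hv ⟨h.le, hzv⟩)
  exact ⟨key hu hv, key hv hu⟩

theorem notMem_lt_iff_of_ordConnected {X : Type*} [LinearOrder X] {C : Set X}
    (hC : C.OrdConnected) {u v z : X} (hu : u ∈ C) (hv : v ∈ C) (hz : z ∉ C) :
    z < u ↔ z < v :=
  lt_notMem_iff_of_ordConnected hC.dual hu hv hz

theorem injective_union_image {α β : Type*} {f : α → β} (hf : Function.Injective f) {D : Set β}
    (hD : ∀ a, f a ∉ D) : Function.Injective fun s : Set α => D ∪ f '' s := by
  intro s t h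
  have hpre (s : Set α) : f ⁻¹' (D ∪ f '' s) = s := by
    rw [preimage_union, hf.preimage_image, preimage_eq_empty_iff.2, empty_union]
    exact disjoint_right.2 (forall_mem_range.2 hD)
  rw [← hpre s, ← hpre t]
  exact congrArg (f ⁻¹' ·) h

/-- The characteristic function of a set, as a bijection onto the Cantor space `α → Bool`. -/
noncomputable def setEquivBool (α : Type*) : Set α ≃ (α → Bool) where
  toFun := boolIndicator
  invFun u := {a | u a}
  left_inv s := ext fun a => (mem_iff_boolIndicator s a).symm
  right_inv u := funext fun a => Bool.eq_iff_iff.2 (mem_iff_boolIndicator {a | u a} a).symm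

theorem setEquivBool_apply_eq_iff {α : Type*} (s : Set α) (a : α) (b : Bool) :
    setEquivBool α s a = b ↔ (a ∈ s ↔ b) := by
  rw [mem_iff_boolIndicator]
  exact Bool.eq_iff_iff

theorem exists_injective_of_not_countable {X : Type*} [MeasurableSpace X] [StandardBorelSpace X]
    {A : Set X} (hA : MeasurableSet A) (hunc : ¬ A.Countable) :
    ∃ g : Set ℕ → X, Function.Injective g ∧ ∀ s, g s ∈ A := by
  have := hA.standardBorel
  let e := PolishSpace.measurableEquivNatBoolOfNotCountable (α := A) (by rwa [countable_coe_iff])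
  exact ⟨fun s => e.symm (setEquivBool ℕ s), Subtype.val_injective.comp
    (e.symm.injective.comp (setEquivBool ℕ).injective), fun s => Subtype.coe_prop _⟩

end SetsAndOrders

variable {ι M N : Type} [LinearOrder M] [LinearOrder N]

section Satisfaction

variable {α β : Type} (c : ι → Set M)

theorem sat_not (φ : (CLOLang ι).Formula α) (v : α → M) :
    Sat M c φ.not v ↔ ¬ Sat M c φ v :=
  Iff.rfl

theorem sat_inf (φ ψ : (CLOLang ι).Formula α) (v : α → M) :
    Sat M c (φ ⊓ ψ) v ↔ Sat M c φ v ∧ Sat M c ψ v :=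
  letI := CLOStr ι M c
  Formula.realize_inf

theorem sat_iInf [Finite β] (φ : β → (CLOLang ι).Formula α) (v : α → M) :
    Sat M c (Formula.iInf φ) v ↔ ∀ b, Sat M c (φ b) v :=
  letI := CLOStr ι M c
  Formula.realize_iInf

theorem sat_relabel (φ : (CLOLang ι).Formula α) (g : α → β) (v : β → M) :
    Sat M c (φ.relabel g) v ↔ Sat M c φ (v ∘ g) :=
  letI := CLOStr ι M c
  Formula.realize_relabel

/-- The formula `∃ x, φ(x, v)`, where the variable `x` of `φ` is the one indexed by `Unit`; this
is the convention for one-variable formulas with parameters in `Aleph0Saturated`. -/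
noncomputable def exFml (φ : (CLOLang ι).Formula (Unit ⊕ α)) : (CLOLang ι).Formula α :=
  (φ.relabel Sum.swap).iExs Unit

theorem sat_exFml (φ : (CLOLang ι).Formula (Unit ⊕ α)) (v : α → M) :
    Sat M c (exFml φ) v ↔ ∃ x, Sat M c φ (Sum.elim (fun _ => x) v) := by
  let := CLOStr ι M c
  refine Formula.realize_iExs.trans ((Equiv.funUnique Unit M).exists_congr fun w => ?_)
  rw [Formula.realize_relabel]
  unfold Sat
  congr! 1
  ext (_ | _) <;> rfl

theorem fmlSet_iInf [Finite β] (φ : β → (CLOLang ι).Formula Unit) :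
    FmlSet ι M c (Formula.iInf φ) = ⋂ b, FmlSet ι M c (φ b) := by
  ext x
  simp only [FmlSet, mem_iInter, mem_ofPred_eq, sat_iInf]

/-- The formula `i < j`. -/
def ltFml (i j : α) : (CLOLang ι).Formula α :=
  Relations.formula₂ (L := CLOLang ι) CLORel.lt (Term.var i) (Term.var j)

theorem sat_ltFml (i j : α) (v : α → M) : Sat M c (ltFml i j) v ↔ v i < v j :=
  Iff.rfl

/-- The formula stating that the `i`-th variable has color `k`. -/
def colorFml (k : ι) (i : α) : (CLOLang ι).Formula α :=
  Relations.formula₁ (L := CLOLang ι) (CLORel.color k) (Term.var i)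

theorem sat_colorFml (k : ι) (i : α) (v : α → M) : Sat M c (colorFml k i) v ↔ v i ∈ c k :=
  Iff.rfl

end Satisfaction

section SameType

variable {α β : Type} {cM : ι → Set M} {cN : ι → Set N}

/-- The tuples `v` in `M` and `w` in `N` have the same complete type over `∅`. -/
def SameType (cM : ι → Set M) (cN : ι → Set N) (v : α → M) (w : α → N) : Prop :=
  ∀ φ : (CLOLang ι).Formula α, Sat M cM φ v ↔ Sat N cN φ w

theorem SameType.symm {v : α → M} {w : α → N} (h : SameType cM cN v w) : SameType cN cM w v :=
  fun φ => (h φ).symm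

theorem SameType.comp {v : α → M} {w : α → N} (h : SameType cM cN v w) (g : β → α) :
    SameType cM cN (v ∘ g) (w ∘ g) := fun φ => by
  rw [← sat_relabel, ← sat_relabel]
  exact h _

theorem SameType.of_imp {v : α → M} {w : α → N}
    (h : ∀ φ : (CLOLang ι).Formula α, Sat M cM φ v → Sat N cN φ w) : SameType cM cN v w :=
  fun φ => ⟨h φ, fun hw => by_contra fun hv => h φ.not hv hw⟩

theorem SameType.lt_iff {v : α → M} {w : α → N} (h : SameType cM cN v w) (i j : α) :
    v i < v j ↔ w i < w j := by
  simpa only [sat_ltFml] using h (ltFml i j)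

theorem SameType.mem_color_iff {v : α → M} {w : α → N} (h : SameType cM cN v w) (i : α) (k : ι) :
    v i ∈ cM k ↔ w i ∈ cN k := by
  simpa only [sat_colorFml] using h (colorFml k i)

theorem SameType.mem_fmlSet_iff {v : α → M} {w : α → N} (h : SameType cM cN v w) (i : α)
    (φ : (CLOLang ι).Formula Unit) : v i ∈ FmlSet ι M cM φ ↔ w i ∈ FmlSet ι N cN φ :=
  h.comp (fun _ => i) φ

theorem cloEquiv_iff_sameType (v : Empty → M) (w : Empty → N) :
    CLOEquiv ι M cM N cN ↔ SameType cM cN v w := by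
  let := CLOStr ι M cM
  let := CLOStr ι N cN
  rw [Subsingleton.elim v default, Subsingleton.elim w default]
  exact elementarilyEquivalent_iff

theorem IsElemMap.sameType [Finite α] {f : M → N} (hf : IsElemMap ι cM cN f) (v : α → M) :
    SameType cM cN v (f ∘ v) := by
  obtain ⟨k, ⟨e⟩⟩ := Finite.exists_equiv_fin α
  have h : SameType cM cN (v ∘ e.symm) (f ∘ v ∘ e.symm) := fun φ => hf k φ _
  simpa only [Function.comp_assoc, Equiv.symm_comp_self, Function.comp_id] using h.comp e

theorem IsElemMap.cloEquiv {f : M → N} (hf : IsElemMap ι cM cN f) : CLOEquiv ι M cM N cN :=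
  (cloEquiv_iff_sameType _ _).2 (hf.sameType Empty.elim)

theorem CLOEquiv.symm (h : CLOEquiv ι M cM N cN) : CLOEquiv ι N cN M cM :=
  Eq.symm h

theorem CLOEquiv.trans {P : Type} [LinearOrder P] {cP : ι → Set P}
    (h : CLOEquiv ι M cM N cN) (h' : CLOEquiv ι N cN P cP) : CLOEquiv ι M cM P cP :=
  Eq.trans h h'

end SameType

section Saturation

variable {α : Type} {c cM : ι → Set M} {cN : ι → Set N}

theorem Aleph0Saturated.exists_forall_sat (hM : Aleph0Saturated ι M c) [Finite α] {J : Type*}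
    (f : J → (CLOLang ι).Formula (Unit ⊕ α)) (v : α → M)
    (h : ∀ q : Finset J, ∃ x, ∀ j ∈ q, Sat M c (f j) (Sum.elim (fun _ => x) v)) :
    ∃ x, ∀ j, Sat M c (f j) (Sum.elim (fun _ => x) v) := by
  classical
  obtain ⟨m, ⟨e⟩⟩ := Finite.exists_equiv_fin α
  let relabelParams (φ : (CLOLang ι).Formula (Unit ⊕ α)) := φ.relabel (Sum.map id e)
  have sat_relabelParams (φ) (x : M) :
      Sat M c (relabelParams φ) (Sum.elim (fun _ => x) (v ∘ e.symm)) ↔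
        Sat M c φ (Sum.elim (fun _ => x) v) := by
    rw [sat_relabel, Sum.elim_comp_map, Function.comp_assoc, e.symm_comp_self,
      Function.comp_id, Function.comp_id]
  obtain ⟨x, hx⟩ := hM m (v ∘ e.symm) ((fun j => relabelParams (f j)) '' univ) fun q hq => by
    obtain ⟨q', -, rfl⟩ := Finset.subset_set_image_iff.1 hq
    obtain ⟨x, hx⟩ := h q'
    exact ⟨x, Finset.forall_mem_image.2 fun j hj => (sat_relabelParams _ x).2 (hx j hj)⟩
  exact ⟨x, fun j => (sat_relabelParams _ x).1 (hx _ (mem_image_of_mem _ (mem_univ j)))⟩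

theorem Aleph0Saturated.exists_sameType_elim (hN : Aleph0Saturated ι N cN) [Finite α]
    {v : α → M} {w : α → N} (h : SameType cM cN v w) (a : M) :
    ∃ b, SameType cM cN (Sum.elim (fun _ : Unit => a) v) (Sum.elim (fun _ => b) w) := by
  let tp := {φ : (CLOLang ι).Formula (Unit ⊕ α) // Sat M cM φ (Sum.elim (fun _ => a) v)}
  obtain ⟨b, hb⟩ := hN.exists_forall_sat (J := tp) Subtype.val w fun q => by
    obtain ⟨y, hy⟩ := (sat_exFml ..).1 <| (h (exFml (Formula.iInf fun φ : q => φ.1.1))).1 <|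
      (sat_exFml ..).2 ⟨a, (sat_iInf ..).2 fun φ => φ.1.2⟩
    exact ⟨y, fun φ hφ => (sat_iInf ..).1 hy ⟨φ, hφ⟩⟩
  exact ⟨b, .of_imp fun φ hφ => hb ⟨φ, hφ⟩⟩

theorem Aleph0Saturated.exists_sameType (hN : Aleph0Saturated ι N cN)
    (h : CLOEquiv ι M cM N cN) (a : M) :
    ∃ b, SameType cM cN (fun _ : Unit => a) (fun _ => b) := by
  obtain ⟨b, hb⟩ :=
    hN.exists_sameType_elim ((cloEquiv_iff_sameType Empty.elim Empty.elim).1 h) a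
  exact ⟨b, hb.comp Sum.inl⟩

end Saturation

section Ultrapower

open Filter

variable {I α : Type} {c : ι → Set M}

/-- The colors of the ultrapower of a CLO along `u`: a germ has a color if its values have that
color `u`-almost everywhere. -/
def germColor (u : Ultrafilter I) (c : ι → Set M) : ι → Set (Germ (u : Filter I) M) :=
  fun k => {x | x.LiftPred (· ∈ c k)}

theorem exists_eq_germ_coe {X : Type} {l : Filter I} (v : α → Germ l X) :
    ∃ w : α → I → X, v = fun i => (w i : Germ l X) :=
  ⟨fun i => (v i).out, funext fun i => (Quotient.out_eq (v i)).symm⟩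

theorem sat_germ [Nonempty M] (u : Ultrafilter I) (φ : (CLOLang ι).Formula α) (x : α → I → M) :
    Sat (Germ (u : Filter I) M) (germColor u c) φ (fun i => (x i : Germ (u : Filter I) M)) ↔
      ∀ᶠ n in u, Sat M c φ fun i => x i n := by
  let := CLOStr ι M c
  have hstr : CLOStr ι (Germ (u : Filter I) M) (germColor u c) =
      Ultraproduct.structure (M := fun _ => M) := by
    refine Structure.ext (by ext n f; exact Empty.elim f) ?_
    ext n R v
    obtain ⟨v, rfl⟩ := exists_eq_germ_coe v
    refine Iff.trans ?_
      (relMap_quotient_mk' (s := (u : Filter I).productSetoid fun _ => M) R v).symm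
    cases R with
    | lt => exact Germ.coe_lt
    | color k => exact Germ.liftPred_coe
  unfold Sat
  rw [hstr]
  exact Ultraproduct.realize_formula_cast φ x

theorem sat_germ_elim [Nonempty M] (u : Ultrafilter I) (φ : (CLOLang ι).Formula (Unit ⊕ α))
    (y : I → M) (a : α → I → M) :
    Sat (Germ (u : Filter I) M) (germColor u c) φ
        (Sum.elim (fun _ => (y : Germ (u : Filter I) M)) fun i => a i) ↔
      ∀ᶠ n in u, Sat M c φ (Sum.elim (fun _ => y n) fun i => a i n) := by
  convert sat_germ u φ (Sum.elim (fun _ => y) a) using 2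
  · ext (_ | _) <;> rfl
  · ext n
    congr! 1
    ext (_ | _) <;> rfl

theorem cloEquiv_germ [Nonempty M] (u : Ultrafilter I) :
    CLOEquiv ι (Germ (u : Filter I) M) (germColor u c) M c := by
  let v : Empty → I → M := Empty.elim
  refine (cloEquiv_iff_sameType (fun i => (v i : Germ (u : Filter I) M)) Empty.elim).2 fun φ =>
    (sat_germ u φ v).trans ?_
  rw [← eventually_const (f := (u : Filter I)) (p := Sat M c φ Empty.elim)]
  exact eventually_congr (.of_forall fun n => by rw [Subsingleton.elim (fun i => v i n)])

instance [Countable ι] : Countable (CLOLang ι).Symbols := by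
  have : IsEmpty (Σ l, (CLOLang ι).Functions l) := ⟨fun f => Empty.elim f.2⟩
  have : Countable (Σ l, (CLOLang ι).Relations l) :=
    Function.Surjective.countable
      (f := fun o : Option ι => o.elim ⟨2, CLORel.lt⟩ fun i => ⟨1, CLORel.color i⟩) <| by
        rintro ⟨_, _ | i⟩
        exacts [⟨none, rfl⟩, ⟨some i, rfl⟩]
  exact inferInstanceAs (Countable ((Σ l, (CLOLang ι).Functions l) ⊕
    (Σ l, (CLOLang ι).Relations l)))

instance [Countable ι] [Countable α] : Countable ((CLOLang ι).Formula α) :=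
  Function.Injective.countable
    (sigma_mk_injective : Function.Injective (Sigma.mk (β := (CLOLang ι).BoundedFormula α) 0))

theorem aleph0Saturated_germ [Countable ι] [Nonempty M] :
    Aleph0Saturated ι (Germ (hyperfilter ℕ : Filter ℕ) M) (germColor (hyperfilter ℕ) c) := by
  classical
  intro m a p hp
  obtain ⟨a, rfl⟩ := exists_eq_germ_coe a
  rcases p.eq_empty_or_nonempty with rfl | hne
  · exact ⟨((fun _ => Classical.arbitrary M : ℕ → M) : Germ _ M), by simp⟩
  obtain ⟨φ, rfl⟩ := (to_countable p).exists_eq_range hne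
  let P (n N : ℕ) := ∃ y, ∀ k < N, Sat M c (φ k) (Sum.elim (fun _ => y) fun i => a i n)
  have hP (N) : ∀ᶠ n in hyperfilter ℕ, P n N := by
    obtain ⟨x, hx⟩ := hp ((Finset.range N).image φ) (by grind)
    induction x using Germ.inductionOn with | h y => ?_
    have := (Finset.eventually_all (Finset.range N)).2 fun k hk =>
      (sat_germ_elim _ (φ k) y a).1 (hx _ (Finset.mem_image_of_mem φ hk))
    filter_upwards [this] with n hn
    exact ⟨y n, fun k hk => hn k (Finset.mem_range.2 hk)⟩
  have hspec (n) : P n (Nat.findGreatest (P n) n) :=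
    Nat.findGreatest_spec (Nat.zero_le n) ⟨Classical.arbitrary M, by simp⟩
  choose y hy using hspec
  refine ⟨(y : Germ _ M), forall_mem_range.2 fun k => (sat_germ_elim ..).2 ?_⟩
  have hlarge : ∀ᶠ n in hyperfilter ℕ, k + 1 ≤ n :=
    (eventually_ge_atTop (k + 1)).filter_mono Nat.hyperfilter_le_atTop
  filter_upwards [hP (k + 1), hlarge] with n hn hkn
  exact hy n k (Nat.le_findGreatest hkn hn)

theorem exists_aleph0Saturated [Countable ι] [Nonempty M] (c : ι → Set M) :
    ∃ (S : Type) (_ : LinearOrder S) (cS : ι → Set S),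
      CLOEquiv ι S cS M c ∧ Aleph0Saturated ι S cS :=
  ⟨Germ (hyperfilter ℕ : Filter ℕ) M, inferInstance, germColor (hyperfilter ℕ) c,
    cloEquiv_germ _, aleph0Saturated_germ⟩

end Ultrapower

section BackForth

variable {α : Type} {cM : ι → Set M} {cN : ι → Set N}

/-- A family of finite partial isomorphisms with the back-and-forth property, as in the
definition of `BackForthEquiv`. -/
structure IsBackForthSystem (cM : ι → Set M) (cN : ι → Set N) (F : Set (Finset (M × N))) :
    Prop where
  isPartialIso : ∀ f ∈ F, IsPartialIso ι cM cN f
  forth : ∀ f ∈ F, ∀ m : M, ∃ g ∈ F, f ⊆ g ∧ ∃ n : N, (m, n) ∈ g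
  back : ∀ f ∈ F, ∀ n : N, ∃ g ∈ F, f ⊆ g ∧ ∃ m : M, (m, n) ∈ g

theorem IsBackForthSystem.realize_iff {F : Set (Finset (M × N))}
    (hF : IsBackForthSystem cM cN F) {n : ℕ} (φ : (CLOLang ι).BoundedFormula α n)
    {f : Finset (M × N)} (hf : f ∈ F) {v : α → M} {w : α → N} {x : Fin n → M} {y : Fin n → N}
    (h : ∀ i : α ⊕ Fin n, (Sum.elim v x i, Sum.elim w y i) ∈ f) :
    @BoundedFormula.Realize (CLOLang ι) M (CLOStr ι M cM) α n φ v x ↔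
      @BoundedFormula.Realize (CLOLang ι) N (CLOStr ι N cN) α n φ w y := by
  let := CLOStr ι M cM
  let := CLOStr ι N cN
  have mem_term {n : ℕ} {f : Finset (M × N)} {x : Fin n → M} {y : Fin n → N}
      (h : ∀ i : α ⊕ Fin n, (Sum.elim v x i, Sum.elim w y i) ∈ f)
      (t : (CLOLang ι).Term (α ⊕ Fin n)) :
      (t.realize (Sum.elim v x), t.realize (Sum.elim w y)) ∈ f :=
    match t with
    | .var i => h i
    | .func g _ => Empty.elim g
  induction φ generalizing f with
  | falsum => exact Iff.rfl
  | equal s t => exact (hF.isPartialIso f hf _ (mem_term h s) _ (mem_term h t)).2.1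
  | rel R ts =>
    cases R with
    | lt => exact (hF.isPartialIso f hf _ (mem_term h (ts 0)) _ (mem_term h (ts 1))).1
    | color k =>
      exact (hF.isPartialIso f hf _ (mem_term h (ts 0)) _ (mem_term h (ts 0))).2.2 k
  | imp φ ψ ihφ ihψ => exact imp_congr (ihφ hf h) (ihψ hf h)
  | all φ ih =>
    have step {g} (hg : g ∈ F) (hfg : f ⊆ g) {m n} (hmn : (m, n) ∈ g) :
        φ.Realize v (Fin.snoc x m) ↔ φ.Realize w (Fin.snoc y n) := by
      refine ih hg (Sum.rec (fun i => hfg (h (Sum.inl i))) (Fin.lastCases ?_ fun i => ?_))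
      · simpa using hmn
      · simpa using hfg (h (Sum.inr i))
    constructor
    · intro hall n
      obtain ⟨g, hg, hfg, m, hmn⟩ := hF.back f hf n
      exact (step hg hfg hmn).1 (hall m)
    · intro hall m
      obtain ⟨g, hg, hfg, n, hmn⟩ := hF.forth f hf m
      exact (step hg hfg hmn).2 (hall n)

theorem IsBackForthSystem.sameType {F : Set (Finset (M × N))} (hF : IsBackForthSystem cM cN F)
    {f : Finset (M × N)} (hf : f ∈ F) {v : α → M} {w : α → N} (h : ∀ i, (v i, w i) ∈ f) :
    SameType cM cN v w :=
  fun φ => hF.realize_iff φ hf (Sum.rec h fun i => i.elim0)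

end BackForth

section Localization

variable {c : ι → Set M} {C : Set M}

theorem isPartialIso_of_lt_iff {cM : ι → Set M} {cN : ι → Set N} {f : Finset (M × N)}
    (hlt : ∀ p ∈ f, ∀ q ∈ f, p.1 < q.1 ↔ p.2 < q.2)
    (hcolor : ∀ p ∈ f, ∀ k, p.1 ∈ cM k ↔ p.2 ∈ cN k) : IsPartialIso ι cM cN f := by
  refine fun p hp q hq => ⟨hlt p hp q hq, ?_, hcolor p hp⟩
  simp only [eq_iff_le_not_lt, ← not_lt, hlt p hp q hq, hlt q hq p hp]

/-- The finite partial maps on `M` which are the identity outside `C` and which, inside `C`, are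
given by two tuples of the same type. -/
def localElemMaps (c : ι → Set M) (C : Set M) : Set (Finset (M × M)) :=
  {f | ∃ (α : Type) (_ : Finite α) (a b : α → M), SameType c c a b ∧ (∀ i, a i ∈ C ∧ b i ∈ C) ∧
    ∀ p ∈ f, p.1 = p.2 ∧ p.1 ∉ C ∨ ∃ i, p = (a i, b i)}

theorem isPartialIso_of_mem_localElemMaps (hC : C.OrdConnected) {f : Finset (M × M)}
    (hf : f ∈ localElemMaps c C) : IsPartialIso ι c c f := by
  obtain ⟨α, -, a, b, hab, hmem, hf⟩ := hf
  refine isPartialIso_of_lt_iff (fun p hp q hq => ?_) fun p hp k => ?_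
  · rcases hf p hp with ⟨hpp, hpC⟩ | ⟨i, rfl⟩ <;> rcases hf q hq with ⟨hqq, hqC⟩ | ⟨j, rfl⟩
    · rw [hpp, hqq]
    · rw [← hpp]
      exact notMem_lt_iff_of_ordConnected hC (hmem j).1 (hmem j).2 hpC
    · rw [← hqq]
      exact lt_notMem_iff_of_ordConnected hC (hmem i).1 (hmem i).2 hqC
    · exact hab.lt_iff i j
  · rcases hf p hp with ⟨hpp, -⟩ | ⟨i, rfl⟩
    · rw [hpp]
    · exact hab.mem_color_iff i k

theorem localElemMaps_forth (hM : Aleph0Saturated ι M c) (χ : (CLOLang ι).Formula Unit)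
    {f : Finset (M × M)} (hf : f ∈ localElemMaps c (FmlSet ι M c χ)) (m : M) :
    ∃ g ∈ localElemMaps c (FmlSet ι M c χ), f ⊆ g ∧ ∃ n, (m, n) ∈ g := by
  classical
  obtain ⟨α, hα, a, b, hab, hmem, hf⟩ := hf
  by_cases hm : m ∈ FmlSet ι M c χ
  · obtain ⟨n, hn⟩ := hM.exists_sameType_elim hab m
    refine ⟨insert (m, n) f, ⟨Unit ⊕ α, inferInstance, _, _, hn, ?_, ?_⟩,
      Finset.subset_insert _ _, n, Finset.mem_insert_self _ _⟩
    · exact Sum.rec (fun i => ⟨hm, (hn.mem_fmlSet_iff (Sum.inl i) χ).1 hm⟩) hmem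
    · refine Finset.forall_mem_insert _ _ _ |>.2 ⟨.inr ⟨Sum.inl (), rfl⟩, fun p hp => ?_⟩
      exact (hf p hp).imp_right fun ⟨i, hi⟩ => ⟨Sum.inr i, hi⟩
  · exact ⟨insert (m, m) f, ⟨α, hα, a, b, hab, hmem, Finset.forall_mem_insert _ _ _ |>.2
      ⟨.inl ⟨rfl, hm⟩, hf⟩⟩, Finset.subset_insert _ _, m, Finset.mem_insert_self _ _⟩

theorem map_swap_mem_localElemMaps {f : Finset (M × M)} (hf : f ∈ localElemMaps c C) :
    f.map (Equiv.prodComm M M).toEmbedding ∈ localElemMaps c C := by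
  obtain ⟨α, hα, a, b, hab, hmem, hf⟩ := hf
  refine ⟨α, hα, b, a, hab.symm, fun i => (hmem i).symm, Finset.forall_mem_map.2 fun p hp => ?_⟩
  rcases hf p hp with ⟨hpp, hpC⟩ | ⟨i, rfl⟩
  · refine .inl ⟨hpp.symm, show p.2 ∉ C from hpp ▸ hpC⟩
  · exact .inr ⟨i, rfl⟩

theorem isBackForthSystem_localElemMaps (hM : Aleph0Saturated ι M c)
    {χ : (CLOLang ι).Formula Unit} (hχ : (FmlSet ι M c χ).OrdConnected) :
    IsBackForthSystem c c (localElemMaps c (FmlSet ι M c χ)) where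
  isPartialIso _ := isPartialIso_of_mem_localElemMaps hχ
  forth _ hf := localElemMaps_forth hM χ hf
  back f hf n := by
    obtain ⟨g, hg, hfg, m, hnm⟩ := localElemMaps_forth hM χ (map_swap_mem_localElemMaps hf) n
    refine ⟨_, map_swap_mem_localElemMaps hg, fun p hp => ?_, m, ?_⟩
    · exact Finset.mem_map.2 ⟨p.swap, hfg (Finset.mem_map_of_mem _ hp), p.swap_swap⟩
    · exact Finset.mem_map.2 ⟨(n, m), hnm, rfl⟩

theorem SameType.elim_of_notMem {α β : Type} [Finite α] [Finite β] (hM : Aleph0Saturated ι M c)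
    {χ : (CLOLang ι).Formula Unit} (hχ : (FmlSet ι M c χ).OrdConnected) {a b : α → M}
    (hab : SameType c c a b) (ha : ∀ i, a i ∈ FmlSet ι M c χ) {x : β → M}
    (hx : ∀ j, x j ∉ FmlSet ι M c χ) : SameType c c (Sum.elim a x) (Sum.elim b x) := by
  classical
  have := Fintype.ofFinite α
  have := Fintype.ofFinite β
  let v : α ⊕ β → M × M := fun i => (Sum.elim a x i, Sum.elim b x i)
  have hv : Finset.univ.image v ∈ localElemMaps c (FmlSet ι M c χ) := by
    refine ⟨α, inferInstance, a, b, hab, fun i => ⟨ha i, (hab.mem_fmlSet_iff i χ).1 (ha i)⟩,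
      Finset.forall_mem_image.2 fun i _ => ?_⟩
    rcases i with i | j
    exacts [.inr ⟨i, rfl⟩, .inl ⟨rfl, hx j⟩]
  exact (isBackForthSystem_localElemMaps hM hχ).sameType hv fun i =>
    Finset.mem_image_of_mem v (Finset.mem_univ i)

theorem Aleph0Saturated.exists_formula_imp_of_notMem {β : Type} [Finite β]
    (hM : Aleph0Saturated ι M c) {χ : (CLOLang ι).Formula Unit}
    (hχ : (FmlSet ι M c χ).OrdConnected) {a : M} (ha : a ∈ FmlSet ι M c χ) {x : β → M}
    (hx : ∀ j, x j ∉ FmlSet ι M c χ) {φ : (CLOLang ι).Formula (Unit ⊕ β)}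
    (hφ : Sat M c φ (Sum.elim (fun _ => a) x)) :
    ∃ θ : (CLOLang ι).Formula Unit, a ∈ FmlSet ι M c θ ∧
      ∀ d ∈ FmlSet ι M c θ, Sat M c φ (Sum.elim (fun _ => d) x) := by
  by_contra! h
  let tp := {θ : (CLOLang ι).Formula Unit // a ∈ FmlSet ι M c θ}
  obtain ⟨d, hd⟩ := hM.exists_forall_sat (J := tp) (fun θ => θ.1.relabel Sum.inl ⊓ φ.not) x
    fun q => by
      obtain ⟨d, hd, hφd⟩ := h (Formula.iInf fun θ : q => θ.1.1) ((sat_iInf ..).2 fun θ => θ.1.2)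
      exact ⟨d, fun θ hθ => (sat_inf ..).2 ⟨(sat_relabel ..).2 ((sat_iInf ..).1 hd ⟨θ, hθ⟩), hφd⟩⟩
  have had : SameType c c (fun _ : Unit => a) (fun _ => d) :=
    .of_imp fun θ hθ => (sat_relabel ..).1 ((sat_inf ..).1 (hd ⟨θ, hθ⟩)).1
  have hnot := ((sat_inf ..).1 (hd ⟨χ, ha⟩)).2
  exact hnot ((had.elim_of_notMem hM hχ (fun _ => ha) hx φ).1 hφ)

end Localization

section ConvexTypes

variable {M₀ : Type} [LinearOrder M₀] {c₀ : ι → Set M₀} {c cM : ι → Set M} {cN : ι → Set N}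

/-- The formula stating that `x` lies strictly below every realization of `φ`. Together with
`aboveFml φ` it serves as a negation of a convex formula `φ` by convex formulas. -/
noncomputable def belowFml (φ : (CLOLang ι).Formula Unit) : (CLOLang ι).Formula Unit :=
  (exFml (φ.relabel Sum.inl ⊓ (ltFml (Sum.inr ()) (Sum.inl ())).not)).not

/-- The formula stating that `x` lies strictly above every realization of `φ`. -/
noncomputable def aboveFml (φ : (CLOLang ι).Formula Unit) : (CLOLang ι).Formula Unit :=
  (exFml (φ.relabel Sum.inl ⊓ (ltFml (Sum.inl ()) (Sum.inr ())).not)).not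

theorem mem_fmlSet_belowFml {φ : (CLOLang ι).Formula Unit} {x : M} :
    x ∈ FmlSet ι M c (belowFml φ) ↔ ∀ y ∈ FmlSet ι M c φ, x < y := by
  simp only [FmlSet, belowFml, mem_ofPred_eq, sat_not, sat_exFml, sat_inf, sat_relabel, sat_ltFml,
    Sum.elim_comp_inl, Sum.elim_inl, Sum.elim_inr, not_exists, not_and_not_right]

theorem mem_fmlSet_aboveFml {φ : (CLOLang ι).Formula Unit} {x : M} :
    x ∈ FmlSet ι M c (aboveFml φ) ↔ ∀ y ∈ FmlSet ι M c φ, y < x := by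
  simp only [FmlSet, aboveFml, mem_ofPred_eq, sat_not, sat_exFml, sat_inf, sat_relabel, sat_ltFml,
    Sum.elim_comp_inl, Sum.elim_inl, Sum.elim_inr, not_exists, not_and_not_right]

theorem convexFml_belowFml (φ : (CLOLang ι).Formula Unit) : ConvexFml ι M₀ c₀ (belowFml φ) :=
  fun _ _ _ _ => ⟨fun _ _ _ hy _ hz => mem_fmlSet_belowFml.2 fun w hw =>
    hz.2.trans_lt (mem_fmlSet_belowFml.1 hy w hw)⟩

theorem convexFml_aboveFml (φ : (CLOLang ι).Formula Unit) : ConvexFml ι M₀ c₀ (aboveFml φ) :=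
  fun _ _ _ _ => ⟨fun _ hx _ _ _ hz => mem_fmlSet_aboveFml.2 fun w hw =>
    (mem_fmlSet_aboveFml.1 hx w hw).trans_le hz.1⟩

theorem disjoint_fmlSet_belowFml (φ : (CLOLang ι).Formula Unit) :
    Disjoint (FmlSet ι M c φ) (FmlSet ι M c (belowFml φ)) :=
  disjoint_left.2 fun y hy h => lt_irrefl y (mem_fmlSet_belowFml.1 h y hy)

theorem disjoint_fmlSet_aboveFml (φ : (CLOLang ι).Formula Unit) :
    Disjoint (FmlSet ι M c φ) (FmlSet ι M c (aboveFml φ)) :=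
  disjoint_left.2 fun y hy h => lt_irrefl y (mem_fmlSet_aboveFml.1 h y hy)

theorem mem_fmlSet_belowFml_or_aboveFml {φ : (CLOLang ι).Formula Unit}
    (hφ : (FmlSet ι M c φ).OrdConnected) {x : M} (hx : x ∉ FmlSet ι M c φ) :
    x ∈ FmlSet ι M c (belowFml φ) ∨ x ∈ FmlSet ι M c (aboveFml φ) := by
  rw [mem_fmlSet_belowFml, mem_fmlSet_aboveFml, or_iff_not_imp_left]
  push Not
  exact fun ⟨y, hy, hyx⟩ z hz => not_le.1 fun hxz => hx (hφ.out hy hz ⟨hyx, hxz⟩)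

/-- The convex type realized by the point `x`, relative to the complete theory of `(M₀, c₀)`. -/
def convexTypeOf (c₀ : ι → Set M₀) (c : ι → Set M) (x : M) : Set ((CLOLang ι).Formula Unit) :=
  {φ | ConvexFml ι M₀ c₀ φ ∧ x ∈ FmlSet ι M c φ}

theorem mem_typeSet_convexTypeOf (x : M) : x ∈ TypeSet ι M c (convexTypeOf c₀ c x) :=
  fun _ hφ => hφ.2

theorem SameType.convexTypeOf_eq {x : M} {y : N}
    (h : SameType cM cN (fun _ : Unit => x) (fun _ => y)) :
    convexTypeOf c₀ cM x = convexTypeOf c₀ cN y :=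
  ext fun φ => and_congr_right fun _ => h φ

theorem isConvexType_convexTypeOf (hM : CLOEquiv ι M c M₀ c₀) (x : M) :
    IsConvexType ι M₀ c₀ (convexTypeOf c₀ c x) := by
  refine ⟨fun φ hφ => hφ.1, ⟨M, inferInstance, c, hM, x, mem_typeSet_convexTypeOf x⟩, ?_⟩
  rintro ψ hψ ⟨B, _, cB, -, b, hb⟩
  refine ⟨hψ, by_contra fun hx => ?_⟩
  have hbψ : b ∈ FmlSet ι B cB ψ := hb ψ (mem_insert _ _)
  rcases mem_fmlSet_belowFml_or_aboveFml (hψ M inferInstance c hM) hx with h | h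
  · exact disjoint_left.1 (disjoint_fmlSet_belowFml ψ) hbψ
      (hb _ (mem_insert_of_mem _ ⟨convexFml_belowFml ψ, h⟩))
  · exact disjoint_left.1 (disjoint_fmlSet_aboveFml ψ) hbψ
      (hb _ (mem_insert_of_mem _ ⟨convexFml_aboveFml ψ, h⟩))

theorem IsConvexType.eq_convexTypeOf (hM : CLOEquiv ι M c M₀ c₀)
    {Φ : Set ((CLOLang ι).Formula Unit)} (hΦ : IsConvexType ι M₀ c₀ Φ) {x : M}
    (hx : x ∈ TypeSet ι M c Φ) : Φ = convexTypeOf c₀ c x :=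
  Subset.antisymm (fun φ hφ => ⟨hΦ.1 φ hφ, hx φ hφ⟩) fun ψ hψ =>
    hΦ.2.2 ψ hψ.1 ⟨M, inferInstance, c, hM, x, forall_mem_insert.2 ⟨hψ.2, hx⟩⟩

theorem convexTypeOf_eq_of_subset (hM : CLOEquiv ι M c M₀ c₀) {x y : M}
    (h : convexTypeOf c₀ c x ⊆ convexTypeOf c₀ c y) : convexTypeOf c₀ c x = convexTypeOf c₀ c y :=
  (isConvexType_convexTypeOf hM x).eq_convexTypeOf hM fun _ hφ => (h hφ).2

theorem IsConvexType.nonempty_carrier {Φ : Set ((CLOLang ι).Formula Unit)}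
    (hΦ : IsConvexType ι M₀ c₀ Φ) : Nonempty M₀ := by
  obtain ⟨B, _, cB, hB, b, -⟩ := hΦ.2.1
  have hB' := (cloEquiv_iff_sameType Empty.elim Empty.elim).1 hB (exFml ⊤)
  obtain ⟨x, -⟩ := (sat_exFml ..).1 <| hB'.1 ((sat_exFml ..).2 ⟨b, id⟩)
  exact ⟨x⟩

/-- The set of convex types, relative to the complete theory of `(M₀, c₀)`, realized in
`(M, c)`. -/
def realizedConvexTypes (c₀ : ι → Set M₀) (c : ι → Set M) :
    Set (Set ((CLOLang ι).Formula Unit)) :=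
  {Φ | IsConvexType ι M₀ c₀ Φ ∧ (TypeSet ι M c Φ).Nonempty}

theorem realizedConvexTypes_eq_range (hM : CLOEquiv ι M c M₀ c₀) :
    realizedConvexTypes c₀ c = range (convexTypeOf c₀ c) := by
  refine Subset.antisymm ?_ (range_subset_iff.2 fun x =>
    ⟨isConvexType_convexTypeOf hM x, x, mem_typeSet_convexTypeOf x⟩)
  rintro Φ ⟨hΦ, x, hx⟩
  exact ⟨x, (hΦ.eq_convexTypeOf hM hx).symm⟩

theorem BackForthEquiv.realizedConvexTypes_eq (hM : CLOEquiv ι M cM M₀ c₀)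
    (hN : CLOEquiv ι N cN M₀ c₀) (h : BackForthEquiv ι M cM N cN) :
    realizedConvexTypes c₀ cM = realizedConvexTypes c₀ cN := by
  obtain ⟨F, ⟨f, hf⟩, hiso, hforth, hback⟩ := h
  have key {g} (hg : g ∈ F) {m n} (hmn : (m, n) ∈ g) :
      convexTypeOf c₀ cM m = convexTypeOf c₀ cN n :=
    (IsBackForthSystem.sameType ⟨hiso, hforth, hback⟩ hg fun _ => hmn).convexTypeOf_eq
  rw [realizedConvexTypes_eq_range hM, realizedConvexTypes_eq_range hN]
  refine Subset.antisymm (range_subset_iff.2 fun m => ?_) (range_subset_iff.2 fun n => ?_)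
  · obtain ⟨g, hg, -, n, hmn⟩ := hforth f hf m
    exact ⟨n, (key hg hmn).symm⟩
  · obtain ⟨g, hg, -, m, hmn⟩ := hback f hf n
    exact ⟨m, key hg hmn⟩

theorem Aleph0Saturated.range_convexTypeOf (hM : Aleph0Saturated ι M c)
    (hM₀ : CLOEquiv ι M c M₀ c₀) :
    range (convexTypeOf c₀ c) = {Φ | IsConvexType ι M₀ c₀ Φ} := by
  refine Subset.antisymm (range_subset_iff.2 (isConvexType_convexTypeOf hM₀)) fun Φ hΦ => ?_
  obtain ⟨B, _, cB, hB, b, hb⟩ := hΦ.2.1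
  obtain ⟨x, hx⟩ := hM.exists_sameType (hB.trans hM₀.symm) b
  exact ⟨x, by rw [hΦ.eq_convexTypeOf hB hb, hx.convexTypeOf_eq]⟩

end ConvexTypes

section ElementarySubstructure

variable {M₀ : Type} [LinearOrder M₀] {c₀ : ι → Set M₀} {c : ι → Set M}

/-- The inclusion of a subset of a CLO, as an embedding of structures, in the form required by
the Tarski–Vaught test. -/
def subtypeEmbedding (c : ι → Set M) (A : Set M) :
    @Embedding (CLOLang ι) A M (CLOStr ι A (subColor c A)) (CLOStr ι M c) :=
  letI := CLOStr ι A (subColor c A)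
  letI := CLOStr ι M c
  { toFun := Subtype.val
    inj' := Subtype.val_injective
    map_fun' := fun f => Empty.elim f
    map_rel' := fun r _ => by cases r <;> exact Iff.rfl }

theorem isElemSubset_of_exists {A : Set M}
    (h : ∀ (n : ℕ) (φ : (CLOLang ι).Formula (Unit ⊕ Fin n)) (x : Fin n → A) (a : M),
      Sat M c φ (Sum.elim (fun _ => a) fun i => x i) →
        ∃ b ∈ A, Sat M c φ (Sum.elim (fun _ => b) fun i => x i)) :
    IsElemSubset ι M c A := by
  let := CLOStr ι A (subColor c A)
  let := CLOStr ι M c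
  suffices htv : ∀ (n : ℕ) (φ : (CLOLang ι).BoundedFormula Empty (n + 1)) (x : Fin n → A) (a : M),
      φ.Realize default (Fin.snoc (subtypeEmbedding c A ∘ x) a : _ → M) →
        ∃ b : A, φ.Realize default
          (Fin.snoc (subtypeEmbedding c A ∘ x) (subtypeEmbedding c A b) : _ → M) from
    fun k φ v => ((subtypeEmbedding c A).isElementary_of_exists htv φ v).symm
  intro n φ x a ha
  let ψ : (CLOLang ι).Formula (Unit ⊕ Fin n) := φ.toFormula.relabel
    (Sum.elim Empty.elim (Fin.snoc (α := fun _ => Unit ⊕ Fin n) Sum.inr (Sum.inl ())))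
  have hψ (b : M) : Sat M c ψ (Sum.elim (fun _ => b) fun i => x i) ↔
      φ.Realize default (Fin.snoc (subtypeEmbedding c A ∘ x) b : _ → M) := by
    refine Formula.realize_relabel.trans (BoundedFormula.realize_toFormula _ _ |>.trans ?_)
    rw [Subsingleton.elim (default : Empty → M), iff_eq_eq]
    congr 1
    ext i
    refine Fin.lastCases ?_ (fun j => ?_) i <;>
      simp only [Function.comp_apply, Sum.elim_inr, Fin.snoc_last, Fin.snoc_castSucc, Sum.elim_inl]
    rfl
  obtain ⟨b, hbA, hb⟩ := h n ψ x a ((hψ a).2 ha)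
  exact ⟨⟨b, hbA⟩, (hψ b).1 hb⟩

/-- The union of the convex types in `Y`, as a subset of `(M, c)`: the candidate for a submodel
realizing exactly the convex types in `Y`. -/
def convexTypeUnion (c₀ : ι → Set M₀) (c : ι → Set M)
    (Y : Set (Set ((CLOLang ι).Formula Unit))) : Set M :=
  convexTypeOf c₀ c ⁻¹' Y

theorem exists_ordConnected_fmlSet_mem_notMem (hM : CLOEquiv ι M c M₀ c₀) {β : Type} [Finite β]
    {a : M} {x : β → M} (hax : ∀ j, convexTypeOf c₀ c a ≠ convexTypeOf c₀ c (x j)) :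
    ∃ χ : (CLOLang ι).Formula Unit, (FmlSet ι M c χ).OrdConnected ∧ a ∈ FmlSet ι M c χ ∧
      ∀ j, x j ∉ FmlSet ι M c χ := by
  have hsep (j) : ∃ χ ∈ convexTypeOf c₀ c a, x j ∉ FmlSet ι M c χ := by
    by_contra! hj
    exact hax j (convexTypeOf_eq_of_subset hM fun χ hχ => ⟨hχ.1, hj χ hχ⟩)
  choose χ hχ hχx using hsep
  refine ⟨Formula.iInf χ, ?_⟩
  simp only [fmlSet_iInf, mem_iInter]
  exact ⟨ordConnected_iInter fun j => (hχ j).1 M inferInstance c hM, fun j => (hχ j).2,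
    fun j h => hχx j (h j)⟩

theorem isElemSubset_convexTypeUnion (hM : CLOEquiv ι M c M₀ c₀) (hsat : Aleph0Saturated ι M c)
    {Y : Set (Set ((CLOLang ι).Formula Unit))}
    (hY : ∀ φ, (FmlSet ι M c φ).Nonempty → (FmlSet ι M c φ ∩ convexTypeUnion c₀ c Y).Nonempty) :
    IsElemSubset ι M c (convexTypeUnion c₀ c Y) := by
  refine isElemSubset_of_exists fun n φ x a ha => ?_
  by_cases haY : a ∈ convexTypeUnion c₀ c Y
  · exact ⟨a, haY, ha⟩
  obtain ⟨χ, hχ, haχ, hxχ⟩ := exists_ordConnected_fmlSet_mem_notMem hM (a := a)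
    (x := fun i => (x i).1) fun i h => haY (h ▸ (x i).2 : convexTypeOf c₀ c a ∈ Y)
  obtain ⟨θ, hθ, himp⟩ := hsat.exists_formula_imp_of_notMem hχ haχ hxχ ha
  obtain ⟨b, hbθ, hbY⟩ := hY θ ⟨a, hθ⟩
  exact ⟨b, hbY, himp b hbθ⟩

theorem range_convexTypeOf_subColor {A : Set M} (hA : IsElemSubset ι M c A) :
    range (convexTypeOf c₀ (subColor c A)) = convexTypeOf c₀ c '' A := by
  rw [image_eq_range]
  congr! 2 with x
  exact (hA.sameType fun _ => x).convexTypeOf_eq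

theorem realizedConvexTypes_convexTypeUnion (hM : CLOEquiv ι M c M₀ c₀)
    {Y : Set (Set ((CLOLang ι).Formula Unit))}
    (hY : IsElemSubset ι M c (convexTypeUnion c₀ c Y)) (hYM : Y ⊆ range (convexTypeOf c₀ c)) :
    realizedConvexTypes c₀ (subColor c (convexTypeUnion c₀ c Y)) = Y := by
  rw [realizedConvexTypes_eq_range (hY.cloEquiv.trans hM), range_convexTypeOf_subColor hY]
  exact image_preimage_eq_of_subset hYM

end ElementarySubstructure

section Cardinality

variable {M₀ : Type} [LinearOrder M₀] {c₀ : ι → Set M₀} {c : ι → Set M}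

theorem exists_countable_convexTypeUnion_inter_nonempty [Countable ι] (c₀ : ι → Set M₀)
    (c : ι → Set M) :
    ∃ D ⊆ range (convexTypeOf c₀ c), D.Countable ∧ ∀ φ, (FmlSet ι M c φ).Nonempty →
      (FmlSet ι M c φ ∩ convexTypeUnion c₀ c D).Nonempty := by
  choose d hd using fun φ : {φ // (FmlSet ι M c φ).Nonempty} => φ.2
  exact ⟨range fun φ => convexTypeOf c₀ c (d φ), range_subset_iff.2 fun φ => mem_range_self _,
    countable_range _, fun φ hφ => ⟨d ⟨φ, hφ⟩, hd ⟨φ, hφ⟩, mem_range_self _⟩⟩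

theorem Aleph0Saturated.isClosed_image_range_convexTypeOf (hM : Aleph0Saturated ι M c) :
    IsClosed (setEquivBool _ '' range (convexTypeOf c₀ c)) := by
  refine isClosed_of_closure_subset fun u hu => ?_
  classical
  let signed (φ : (CLOLang ι).Formula Unit) : (CLOLang ι).Formula Unit :=
    if u φ then φ else φ.not
  have signed_iff {φ} (hφ : ConvexFml ι M₀ c₀ φ) (x) :
      x ∈ FmlSet ι M c (signed φ) ↔ (φ ∈ convexTypeOf c₀ c x ↔ u φ) := by
    rw [convexTypeOf, mem_ofPred_eq, and_iff_right hφ]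
    by_cases hu : u φ
    · rw [show signed φ = φ from if_pos hu]
      exact (iff_true_right hu).symm
    · rw [show signed φ = φ.not from if_neg hu]
      exact (sat_not ..).trans (iff_false_right hu).symm
  have hfin (q : Finset ((CLOLang ι).Formula Unit)) :
      ∃ x, ∀ φ ∈ q, φ ∈ convexTypeOf c₀ c x ↔ u φ := by
    obtain ⟨-, huq, -, ⟨x, rfl⟩, rfl⟩ := mem_closure_iff.1 hu (Set.pi q fun φ => {u φ})
      (isOpen_set_pi q.finite_toSet fun φ _ => isOpen_discrete _) fun φ _ => rfl
    exact ⟨x, fun φ hφ => (setEquivBool_apply_eq_iff ..).1 (huq φ hφ)⟩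
  obtain ⟨x, hx⟩ := hM.exists_forall_sat (J := {φ // ConvexFml ι M₀ c₀ φ})
    (fun φ => (signed φ.1).relabel Sum.inl) (Empty.elim : Empty → M) fun q => by
      obtain ⟨x, hx⟩ := hfin (q.image Subtype.val)
      exact ⟨x, fun φ hφ => (sat_relabel ..).2 <|
        (signed_iff φ.2 x).2 (hx φ (Finset.mem_image_of_mem _ hφ))⟩
  refine ⟨_, ⟨x, rfl⟩, funext fun φ => (setEquivBool_apply_eq_iff ..).2 ?_⟩
  by_cases hφ : ConvexFml ι M₀ c₀ φ
  · exact (signed_iff hφ x).1 ((sat_relabel ..).1 (hx ⟨φ, hφ⟩))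
  · obtain ⟨y, hy⟩ := hfin {φ}
    rw [← hy φ (Finset.mem_singleton_self φ)]
    exact iff_of_false (fun h => hφ h.1) fun h => hφ h.1

theorem Aleph0Saturated.exists_injective_range_convexTypeOf_diff [Countable ι]
    (hM : Aleph0Saturated ι M c) (hunc : ¬ (range (convexTypeOf c₀ c)).Countable)
    {D : Set (Set ((CLOLang ι).Formula Unit))} (hD : D.Countable) :
    ∃ g : Set ℕ → Set ((CLOLang ι).Formula Unit), Function.Injective g ∧
      ∀ s, g s ∈ range (convexTypeOf c₀ c) \ D := by
  let e := setEquivBool ((CLOLang ι).Formula Unit)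
  have hmeas : MeasurableSet (e '' (range (convexTypeOf c₀ c) \ D)) := by
    rw [image_sdiff e.injective]
    exact hM.isClosed_image_range_convexTypeOf.measurableSet.diff (hD.image e).measurableSet
  have hdiff : ¬ (range (convexTypeOf c₀ c) \ D).Countable := fun h =>
    hunc ((h.union hD).mono (subset_sdiff_union _ _))
  obtain ⟨g, hg, hgmem⟩ := exists_injective_of_not_countable hmeas fun h =>
    hdiff (countable_of_injective_of_countable_image e.injective.injOn h)
  refine ⟨e.symm ∘ g, e.symm.injective.comp hg, fun s => ?_⟩
  obtain ⟨Φ, hΦ, hs⟩ := hgmem s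
  rwa [Function.comp_apply, ← hs, e.symm_apply_apply]

end Cardinality

theorem stmt18_general {ι : Type} [Countable ι] {M₀ : Type} [LinearOrder M₀] (c₀ : ι → Set M₀)
    (huncount : ¬ {Φ | IsConvexType ι M₀ c₀ Φ}.Countable) :
    ∃ (N : Set (Set ℕ) → Type) (iN : ∀ s, LinearOrder (N s)) (cN : ∀ s, ι → Set (N s)),
      (∀ s, letI := iN s; CLOEquiv ι (N s) (cN s) M₀ c₀) ∧
      (∀ s t, s ≠ t →
        (letI := iN s;
          {Φ | IsConvexType ι M₀ c₀ Φ ∧ (TypeSet ι (N s) (cN s) Φ).Nonempty}) ≠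
        (letI := iN t;
          {Φ | IsConvexType ι M₀ c₀ Φ ∧ (TypeSet ι (N t) (cN t) Φ).Nonempty})) ∧
      ∀ s t, s ≠ t → letI := iN s; letI := iN t;
        ¬ BackForthEquiv ι (N s) (cN s) (N t) (cN t) := by
  have : Nonempty M₀ := by
    by_contra h
    exact huncount (countable_empty.mono fun Φ hΦ => h hΦ.nonempty_carrier)
  obtain ⟨S, _, c, hS, hsat⟩ := exists_aleph0Saturated c₀
  rw [← hsat.range_convexTypeOf hS] at huncount
  obtain ⟨D, hDS, hD, hdense⟩ := exists_countable_convexTypeUnion_inter_nonempty c₀ c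
  obtain ⟨g, hg, hgmem⟩ := hsat.exists_injective_range_convexTypeOf_diff huncount hD
  let Y (s : Set (Set ℕ)) := D ∪ g '' s
  have hY : Function.Injective Y := injective_union_image hg fun a => (hgmem a).2
  have hYS (s) : Y s ⊆ range (convexTypeOf c₀ c) :=
    union_subset hDS (image_subset_iff.2 fun a _ => (hgmem a).1)
  let A (s : Set (Set ℕ)) := convexTypeUnion c₀ c (Y s)
  have hA (s) : IsElemSubset ι S c (A s) := isElemSubset_convexTypeUnion hS hsat fun φ hφ =>
    (hdense φ hφ).mono (inter_subset_inter_right _ (preimage_mono subset_union_left))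
  have hmodel (s) : CLOEquiv ι (A s) (subColor c (A s)) M₀ c₀ := (hA s).cloEquiv.trans hS
  have hrealized (s) : realizedConvexTypes c₀ (subColor c (A s)) = Y s :=
    realizedConvexTypes_convexTypeUnion hS (hA s) (hYS s)
  have hdistinct (s t) (hst : s ≠ t) :
      realizedConvexTypes c₀ (subColor c (A s)) ≠ realizedConvexTypes c₀ (subColor c (A t)) := by
    rw [hrealized, hrealized]
    exact hY.ne hst
  exact ⟨fun s => A s, fun _ => inferInstance, fun s => subColor c (A s), hmodel, hdistinct,
    fun s t hst h => hdistinct s t hst (h.realizedConvexTypes_eq (hmodel s) (hmodel t))⟩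

theorem stmt18 {ι : Type} [Countable ι] {M₀ : Type} [LinearOrder M₀] (c₀ : ι → Set M₀)
    (hLS : LocallySimple ι M₀ c₀)
    (huncount : ¬ {Φ | IsConvexType ι M₀ c₀ Φ}.Countable) :
    ∃ (N : Set (Set ℕ) → Type) (iN : ∀ s, LinearOrder (N s)) (cN : ∀ s, ι → Set (N s)),
      (∀ s, letI := iN s; CLOEquiv ι (N s) (cN s) M₀ c₀) ∧
      (∀ s t, s ≠ t →
        (letI := iN s;
          {Φ | IsConvexType ι M₀ c₀ Φ ∧ (TypeSet ι (N s) (cN s) Φ).Nonempty}) ≠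
        (letI := iN t;
          {Φ | IsConvexType ι M₀ c₀ Φ ∧ (TypeSet ι (N t) (cN t) Φ).Nonempty})) ∧
      ∀ s t, s ≠ t → letI := iN s; letI := iN t;
        ¬ BackForthEquiv ι (N s) (cN s) (N t) (cN t) :=
  stmt18_general c₀ huncount
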